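/- arXiv:1605.05625 — 3 statements merged into one kernel-verified Lean document; each statement's English description precedes it below -/
import Mathlib

section
/- Let M be a positive integer and let a : ℕ → ℂ be finitely supported. Then the sum over all primitive Dirichlet characters χ modulo M of |Σ_{n≥1} a(n)χ(n)|² is at most φ(M) · Σ_{c ∈ ℤ/Mℤ} |Σ_{n≥1, n ≡ c (mod M)} a(n)|², where φ is Euler's totient function. -/
open scoped Classical

lemma aux_orth (M : ℕ) [NeZero M] (b c : ZMod M) :
    ∑ χ : DirichletCharacter ℂ M, χ b * (starRingEnd ℂ) (χ c) =
      if c = b ∧ IsUnit c then (Nat.totient M : ℂ) else 0 := by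
  by_cases hc : IsUnit c
  · have h := DirichletCharacter.sum_char_inv_mul_char_eq ℂ hc b
    simp only [hc, and_true]
    have e : ∑ χ : DirichletCharacter ℂ M, χ b * (starRingEnd ℂ) (χ c) =
        ∑ χ : DirichletCharacter ℂ M, χ c⁻¹ * χ b := by
      refine Finset.sum_congr rfl fun χ _ => ?_
      rw [mul_comm, starRingEnd_apply, MulChar.star_apply', MulChar.inv_apply]
      congr 2
      obtain ⟨u, rfl⟩ := hc
      rw [Ring.inverse_unit, ZMod.inv_coe_unit]
    rw [e]
    convert h
  · simp only [hc, and_false, if_false]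
    exact Finset.sum_eq_zero fun χ _ => by rw [χ.map_nonunit hc]; simp

lemma aux_bound (M : ℕ) [NeZero M] (A : ZMod M → ℂ) :
    ∑ χ : DirichletCharacter ℂ M, ‖∑ c, A c * χ c‖ ^ 2 ≤
      (Nat.totient M : ℝ) * ∑ c, ‖A c‖ ^ 2 := by
  have h : ∑ χ : DirichletCharacter ℂ M, ‖∑ c, A c * χ c‖ ^ 2 =
      ∑ c, if IsUnit c then (Nat.totient M : ℝ) * ‖A c‖ ^ 2 else 0 := by
    apply Complex.ofReal_injective
    push_cast
    calc ∑ χ : DirichletCharacter ℂ M, (‖∑ c, A c * χ c‖ : ℂ) ^ 2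
        = ∑ χ : DirichletCharacter ℂ M, ∑ b, ∑ c,
          A b * (starRingEnd ℂ) (A c) * (χ b * (starRingEnd ℂ) (χ c)) := by
          refine Finset.sum_congr rfl fun χ _ => ?_
          rw [← Complex.mul_conj', map_sum, Finset.sum_mul_sum]
          refine Finset.sum_congr rfl fun b _ => Finset.sum_congr rfl fun c _ => ?_
          rw [map_mul]; ring
      _ = ∑ b, ∑ c, A b * (starRingEnd ℂ) (A c) *
          ∑ χ : DirichletCharacter ℂ M, (χ b * (starRingEnd ℂ) (χ c)) := by
          rw [Finset.sum_comm]
          refine Finset.sum_congr rfl fun b _ => ?_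
          rw [Finset.sum_comm]
          refine Finset.sum_congr rfl fun c _ => ?_
          rw [Finset.mul_sum]
      _ = _ := by
          refine Finset.sum_congr rfl fun b _ => ?_
          rw [Finset.sum_eq_single b]
          · rw [aux_orth, Complex.mul_conj']
            by_cases hb : IsUnit b <;> simp [hb, mul_comm]
          · intro c _ hcb
            rw [aux_orth]; simp [hcb]
          · simp
  rw [h, Finset.mul_sum]
  refine Finset.sum_le_sum fun c _ => ?_
  split_ifs
  · exact le_rfl
  · positivity

/-- Second-moment reduction: the sum over primitive Dirichlet characters modulo `M` of the
squared modulus of a twisted sum is bounded by `φ(M)` times the sum over residue classes of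
the squared modulus of the corresponding congruence sums. -/
theorem second_moment_reduction (M : ℕ) [NeZero M] (a : ℕ → ℂ)
    (ha : (Function.support a).Finite) :
    ∑ χ : DirichletCharacter ℂ M,
      (if χ.IsPrimitive then ‖∑' n : ℕ, if 1 ≤ n then a n * χ (n : ZMod M) else 0‖ ^ 2 else 0)
    ≤ (Nat.totient M : ℝ) *
        ∑ c : ZMod M,
          ‖∑' n : ℕ, if 1 ≤ n ∧ ((n : ZMod M) = c) then a n else 0‖ ^ 2 := by
  have h0 : ∀ n, n ∉ ha.toFinset → a n = 0 := fun n hn => by simpa using hn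
  refine le_trans ?_ (aux_bound M _)
  refine Finset.sum_le_sum fun χ _ => ?_
  have e : (∑' n : ℕ, if 1 ≤ n then a n * χ (n : ZMod M) else 0) =
      ∑ c : ZMod M, (∑' n : ℕ, if 1 ≤ n ∧ ((n : ZMod M) = c) then a n else 0) * χ c := by
    rw [tsum_eq_sum (s := ha.toFinset) (fun n hn => by simp [h0 n hn])]
    have : ∀ c : ZMod M, (∑' n : ℕ, if 1 ≤ n ∧ ((n : ZMod M) = c) then a n else 0) =
        ∑ n ∈ ha.toFinset, if 1 ≤ n ∧ ((n : ZMod M) = c) then a n else 0 := fun c =>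
      tsum_eq_sum (fun n hn => by simp [h0 n hn])
    simp only [this, Finset.sum_mul]
    rw [Finset.sum_comm]
    refine Finset.sum_congr rfl fun n _ => ?_
    rw [Finset.sum_eq_single (n : ZMod M)]
    · by_cases hn : 1 ≤ n <;> simp [hn]
    · intro c _ hc
      simp [Ne.symm hc]
    · simp
  rw [e]
  split_ifs
  · exact le_rfl
  · positivity
end

section
/- For every integer ν ≥ 1 and every integer j ≥ 0 there is a constant C = C(ν,j) > 0 such that for all real x ≥ 1, |x^j · W_ν^{(j)}(x)| ≤ C (1+x)^{−1/2}, where W_ν^{(j)} denotes the j-th derivative of W_ν. -/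
open scoped Real

/-- The function `W_ν` appearing in the decomposition
`J_ν(x) = e^{ix} W_ν(x) + conj(e^{ix} W_ν(x))` of the Bessel function of the first kind. -/
noncomputable def besselW (ν : ℕ) (x : ℝ) : ℂ :=
  (Complex.exp (Complex.I * (Real.pi * ν / 2 - Real.pi / 4)) / Complex.Gamma ((ν : ℂ) + 1 / 2)) *
    (Real.sqrt (2 / (Real.pi * x)) : ℂ) *
    ∫ y in Set.Ioi (0 : ℝ),
      (Real.exp (-y) : ℂ) * ((y : ℂ) * (1 + Complex.I * (y : ℂ) / (2 * (x : ℂ)))) ^ ((ν : ℂ) - 1 / 2)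

open MeasureTheory Set Filter Topology

lemma aux_restrict (F : ℂ → ℂ) (U : Set ℂ) (hU : IsOpen U) (hF : DifferentiableOn ℂ F U) (j : ℕ) :
    DifferentiableOn ℂ (iteratedDeriv j F) U ∧
    ∀ x : ℝ, (x : ℂ) ∈ U → iteratedDeriv j (fun t : ℝ => F t) x = iteratedDeriv j F x := by
  induction j with
  | zero => simpa using hF
  | succ n ih =>
    obtain ⟨h1, h2⟩ := ih
    refine ⟨?_, ?_⟩
    · rw [iteratedDeriv_succ]
      exact h1.deriv hU
    · intro x hx
      rw [iteratedDeriv_succ, iteratedDeriv_succ]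
      have hev : iteratedDeriv n (fun t : ℝ => F t) =ᶠ[𝓝 x] fun t : ℝ => iteratedDeriv n F t := by
        have : ∀ᶠ t : ℝ in 𝓝 x, (t : ℂ) ∈ U :=
          Complex.continuous_ofReal.continuousAt.eventually (hU.mem_nhds hx)
        filter_upwards [this] with t ht using h2 t ht
      rw [hev.deriv_eq]
      exact ((h1.differentiableAt (hU.mem_nhds hx)).hasDerivAt.comp_ofReal).deriv

/-- complexified integrand -/
noncomputable def auxG (a : ℝ) (z : ℂ) (y : ℝ) : ℂ :=
  (Real.exp (-y) : ℂ) * ((y : ℂ) * (1 + Complex.I * (y : ℂ) / (2 * z))) ^ (a : ℂ)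

noncomputable def auxG' (a : ℝ) (z : ℂ) (y : ℝ) : ℂ :=
  (Real.exp (-y) : ℂ) * ((a : ℂ) * ((y : ℂ) * (1 + Complex.I * (y : ℂ) / (2 * z))) ^ ((a : ℂ) - 1)
    * ((y : ℂ) * (Complex.I * (y : ℂ) / 2 * (-(z ^ 2)⁻¹))))

lemma aux_slit {z : ℂ} (hz : 0 < z.re) {y : ℝ} (hy : 0 < y) :
    (y : ℂ) * (1 + Complex.I * (y : ℂ) / (2 * z)) ∈ Complex.slitPlane := by
  right
  have hn : 0 < Complex.normSq z := Complex.normSq_pos.2 (by rintro rfl; simp at hz)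
  have : ((y : ℂ) * (1 + Complex.I * (y : ℂ) / (2 * z))) =
      (y : ℂ) + ((y ^ 2 / 2 : ℝ) : ℂ) * (Complex.I * z⁻¹) := by
    have : z ≠ 0 := by rintro rfl; simp at hz
    push_cast
    field_simp
  rw [this]
  simp only [Complex.add_im, Complex.ofReal_im, Complex.im_ofReal_mul, Complex.I_mul_im,
    Complex.inv_re, zero_add]
  positivity

lemma aux_hasDeriv (a : ℝ) {z : ℂ} (hz : 0 < z.re) {y : ℝ} (hy : 0 < y) :
    HasDerivAt (fun z => auxG a z y) (auxG' a z y) z := by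
  have hz0 : z ≠ 0 := by rintro rfl; simp at hz
  unfold auxG auxG'
  refine HasDerivAt.const_mul _ (HasDerivAt.cpow_const ?_ (aux_slit hz hy))
  refine HasDerivAt.const_mul _ ?_
  have h := ((hasDerivAt_inv hz0).const_mul (Complex.I * (y : ℂ) / 2)).const_add 1
  refine h.congr_of_eventuallyEq (Eventually.of_forall fun w => ?_)
  simp only [div_eq_mul_inv, mul_inv]
  ring

lemma aux_bound_s3 (n : ℕ) (a : ℝ) (ha0 : 0 ≤ a) (ha : a ≤ n) : ∃ K : ℝ, 0 < K ∧
    ∀ z : ℂ, 1 / 4 < z.re → ∀ y : ℝ, 0 < y → ‖auxG a z y‖ ≤ K * Real.exp (-(1 / 2) * y) := by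
  refine ⟨8 ^ (2 * n) * (2 * n).factorial * Real.exp (1 / 8), by positivity, ?_⟩
  intro z hz y hy
  have hzn : 1 / 4 ≤ ‖z‖ := hz.le.trans (Complex.re_le_norm z)
  unfold auxG
  rw [norm_mul, Complex.norm_cpow_real, Complex.norm_real, Real.norm_of_nonneg (Real.exp_pos _).le]
  have h1 : ‖(y : ℂ) * (1 + Complex.I * (y : ℂ) / (2 * z))‖ ≤ (1 + 2 * y) ^ 2 := by
    have h2 : ‖1 + Complex.I * (y : ℂ) / (2 * z)‖ ≤ 1 + 2 * y := by
      refine (norm_add_le _ _).trans ?_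
      rw [norm_one, norm_div, norm_mul, norm_mul, Complex.norm_I, Complex.norm_real,
        Real.norm_of_nonneg hy.le]
      gcongr
      rw [div_le_iff₀ (mul_pos (by norm_num) (by linarith))]
      norm_num
      nlinarith
    rw [norm_mul, Complex.norm_real, Real.norm_of_nonneg hy.le, sq]
    gcongr
    linarith
  have h3 : ‖(y : ℂ) * (1 + Complex.I * (y : ℂ) / (2 * z))‖ ^ a ≤ (1 + 2 * y) ^ (2 * n) := by
    refine (Real.rpow_le_rpow (norm_nonneg _) h1 ha0).trans ?_
    refine (Real.rpow_le_rpow_of_exponent_le (by nlinarith) ha).trans ?_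
    rw [Real.rpow_natCast, pow_mul]
  have h4 := Real.pow_div_factorial_le_exp (x := (1 + 2 * y) / 8) (by positivity) (2 * n)
  rw [div_le_iff₀ (by positivity), div_pow, div_le_iff₀ (by positivity)] at h4
  have h5 : Real.exp ((1 + 2 * y) / 8) ≤ Real.exp (1 / 8) * Real.exp (y / 2) := by
    rw [← Real.exp_add]
    gcongr
    linarith
  have h6 : Real.exp (-(1 / 2) * y) = Real.exp (-y) * Real.exp (y / 2) := by
    rw [← Real.exp_add]; congr 1; ring
  calc _ ≤ Real.exp (-y) * (1 + 2 * y) ^ (2 * n) := by gcongr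
    _ ≤ Real.exp (-y) * ((Real.exp (1 / 8) * Real.exp (y / 2)) * (2 * n).factorial * 8 ^ (2 * n)) := by
      gcongr
      refine h4.trans ?_
      gcongr
    _ = _ := by rw [h6]; ring

lemma aux_meas (a : ℝ) (z : ℂ) : Measurable (auxG a z) := by
  unfold auxG; fun_prop

lemma aux_meas' (a : ℝ) (z : ℂ) : Measurable (auxG' a z) := by
  unfold auxG'; fun_prop

lemma aux_int {K : ℝ} : Integrable (fun y : ℝ => K * Real.exp (-(1 / 2) * y))
    (volume.restrict (Ioi 0)) :=
  (exp_neg_integrableOn_Ioi 0 (by norm_num : (0 : ℝ) < 1 / 2)).const_mul K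

lemma aux_diff (a K : ℝ)
    (hK : ∀ z : ℂ, 1 / 4 < z.re → ∀ y : ℝ, 0 < y → ‖auxG a z y‖ ≤ K * Real.exp (-(1 / 2) * y)) :
    DifferentiableOn ℂ (fun z => ∫ y in Ioi (0 : ℝ), auxG a z y) {z | 1 / 4 < z.re} := by
  intro z₀ hz₀
  have hz₀ : 1 / 4 < z₀.re := hz₀
  set ε := (z₀.re - 1 / 4) / 4 with hε
  have hεp : 0 < ε := by rw [hε]; linarith
  have hnear : ∀ z ∈ Metric.ball z₀ ε, ∀ w ∈ Metric.closedBall z ε, 1 / 4 < w.re := by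
    intro z hz w hw
    rw [Metric.mem_ball, dist_comm, dist_eq_norm] at hz
    rw [Metric.mem_closedBall, dist_comm, dist_eq_norm] at hw
    have h1 := (Complex.re_le_norm (z₀ - z)).trans_lt hz
    have h2 := (Complex.re_le_norm (z - w)).trans hw
    simp only [Complex.sub_re] at h1 h2
    linarith
  have hself : ∀ z ∈ Metric.ball z₀ ε, 1 / 4 < z.re := fun z hz =>
    hnear z hz z (Metric.mem_closedBall_self hεp.le)
  have key := hasDerivAt_integral_of_dominated_loc_of_deriv_le (μ := volume.restrict (Ioi (0 : ℝ)))
    (F := auxG a) (F' := auxG' a) (x₀ := z₀) (s := Metric.ball z₀ ε)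
    (bound := fun y => K / ε * Real.exp (-(1 / 2) * y))
    (Metric.ball_mem_nhds _ hεp) (Eventually.of_forall fun z => (aux_meas a z).aestronglyMeasurable)
    (by
      refine Integrable.mono' (aux_int (K := K)) (aux_meas a z₀).aestronglyMeasurable ?_
      filter_upwards [ae_restrict_mem measurableSet_Ioi] with y hy using hK z₀ hz₀ y hy)
    (aux_meas' a z₀).aestronglyMeasurable
    (by
      filter_upwards [ae_restrict_mem measurableSet_Ioi] with y hy
      intro z hz
      have hd := aux_hasDeriv a (z := z) (by linarith [hself z hz]) hy
      rw [← hd.deriv]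
      refine (Complex.norm_deriv_le_of_forall_mem_sphere_norm_le hεp
        (C := K * Real.exp (-(1 / 2) * y)) ?_ ?_).trans (by rw [div_mul_eq_mul_div])
      · refine DifferentiableOn.diffContOnCl ?_
        intro w hw
        have := hnear z hz w (Metric.closure_ball_subset_closedBall hw)
        exact (aux_hasDeriv a (by linarith) hy).differentiableAt.differentiableWithinAt
      · intro w hw
        exact hK w (hnear z hz w (Metric.sphere_subset_closedBall hw)) y hy)
    aux_int
    (by
      filter_upwards [ae_restrict_mem measurableSet_Ioi] with y hy
      intro z hz
      exact aux_hasDeriv a (by linarith [hself z hz]) hy)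
  exact key.2.differentiableAt.differentiableWithinAt

/-- For every integer `ν ≥ 1` and every `j ≥ 0`, one has `x^j W_ν^{(j)}(x) ≪ (1+x)^{-1/2}`
for `x ≥ 1`. -/
theorem besselW_iteratedDeriv_bound (ν : ℕ) (hν : 1 ≤ ν) (j : ℕ) :
    ∃ C : ℝ, 0 < C ∧ ∀ x : ℝ, 1 ≤ x →
      ‖(x : ℂ) ^ j * iteratedDeriv j (besselW ν) x‖ ≤ C * (1 + x) ^ (-(1 / 2 : ℝ)) := by
  have hν' : (1 : ℝ) ≤ ν := by exact_mod_cast hν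
  set a : ℝ := (ν : ℝ) - 1 / 2 with ha
  obtain ⟨K, hKp, hK⟩ := aux_bound_s3 ν a (by linarith) (by linarith)
  set c : ℂ := (Complex.exp (Complex.I * (Real.pi * ν / 2 - Real.pi / 4)) /
    Complex.Gamma ((ν : ℂ) + 1 / 2)) * (Real.sqrt (2 / Real.pi) : ℂ) with hc
  set F : ℂ → ℂ := fun z => c * z ^ ((-(1 / 2) : ℝ) : ℂ) * ∫ y in Ioi (0 : ℝ), auxG a z y with hF
  set U : Set ℂ := {z | 1 / 4 < z.re} with hUdef
  have hU : IsOpen U := isOpen_lt continuous_const Complex.continuous_re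
  have hFd : DifferentiableOn ℂ F U := by
    refine DifferentiableOn.mul (DifferentiableOn.const_mul ?_ _) (aux_diff a K hK)
    refine differentiableOn_id.cpow_const ?_
    intro z hz
    left
    have : 1 / 4 < z.re := hz
    simp only [id]; linarith
  obtain ⟨-, hres⟩ := aux_restrict F U hU hFd j
  have hW : ∀ t : ℝ, 0 < t → besselW ν t = F t := by
    intro t ht
    simp only [besselW, hF, hc, auxG]
    have h1 : (Real.sqrt (2 / (Real.pi * t)) : ℂ) =
        (Real.sqrt (2 / Real.pi) : ℂ) * (t : ℂ) ^ ((-(1 / 2) : ℝ) : ℂ) := by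
      rw [← Complex.ofReal_cpow ht.le, ← Complex.ofReal_mul]
      congr 1
      rw [Real.rpow_neg ht.le, ← Real.sqrt_eq_rpow, ← div_eq_mul_inv, ← Real.sqrt_div' _ ht.le,
        div_div]
    have h2 : ((a : ℝ) : ℂ) = (ν : ℂ) - 1 / 2 := by rw [ha]; push_cast; rfl
    rw [h1, h2]
    ring
  set I : ℝ := ∫ y in Ioi (0 : ℝ), K * Real.exp (-(1 / 2) * y) with hI
  have hI0 : 0 ≤ I := integral_nonneg fun y => by positivity
  have hFb : ∀ z ∈ U, ‖F z‖ ≤ ‖c‖ * ‖z‖ ^ (-(1 / 2) : ℝ) * I := by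
    intro z hz
    simp only [hF]
    rw [norm_mul, norm_mul, Complex.norm_cpow_real]
    gcongr
    refine norm_integral_le_of_norm_le aux_int ?_
    filter_upwards [ae_restrict_mem measurableSet_Ioi] with y hy using hK z hz y hy
  refine ⟨j.factorial * 2 ^ j * (‖c‖ * 2 * I) + 1, by positivity, ?_⟩
  intro x hx
  have hx0 : 0 < x := by linarith
  have hxU : (x : ℂ) ∈ U := by
    simp only [hUdef, mem_ofPred_eq, Complex.ofReal_re]; linarith
  have e1 : iteratedDeriv j (besselW ν) x = iteratedDeriv j F x := by
    rw [← hres x hxU]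
    refine Filter.EventuallyEq.iteratedDeriv_eq j ?_
    filter_upwards [lt_mem_nhds hx0] with t ht using hW t ht
  have hball : ∀ w ∈ Metric.closedBall (x : ℂ) (x / 2), x / 2 ≤ w.re := by
    intro w hw
    rw [Metric.mem_closedBall, dist_comm, dist_eq_norm] at hw
    have h2 := (Complex.re_le_norm (x - w)).trans hw
    simp only [Complex.sub_re, Complex.ofReal_re] at h2
    linarith
  have hballU : ∀ w ∈ Metric.closedBall (x : ℂ) (x / 2), w ∈ U := by
    intro w hw
    have := hball w hw
    change 1 / 4 < w.re
    linarith
  have hpow : (x / 2) ^ (-(1 / 2) : ℝ) ≤ 2 * (1 + x) ^ (-(1 / 2) : ℝ) := by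
    have : (2 : ℝ) = (1 / 4 : ℝ) ^ (-(1 / 2) : ℝ) := by
      rw [Real.rpow_neg (by norm_num), ← Real.sqrt_eq_rpow,
        show (1 / 4 : ℝ) = (1 / 2) ^ 2 by norm_num, Real.sqrt_sq (by norm_num)]
      norm_num
    calc (x / 2) ^ (-(1 / 2) : ℝ) ≤ (1 / 4 * (1 + x)) ^ (-(1 / 2) : ℝ) :=
          Real.rpow_le_rpow_of_nonpos (by positivity) (by linarith) (by norm_num)
      _ = (1 / 4 : ℝ) ^ (-(1 / 2) : ℝ) * (1 + x) ^ (-(1 / 2) : ℝ) :=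
          Real.mul_rpow (by norm_num) (by positivity)
      _ = _ := by rw [← this]
  have hC := Complex.norm_iteratedDeriv_le_of_forall_mem_sphere_norm_le (c := (x : ℂ)) (R := x / 2)
    (C := ‖c‖ * (2 * (1 + x) ^ (-(1 / 2) : ℝ)) * I) (f := F) j (by positivity)
    (DifferentiableOn.diffContOnCl (hFd.mono fun w hw =>
      hballU w (Metric.closure_ball_subset_closedBall hw)))
    (by
      intro w hw
      have hw' := Metric.sphere_subset_closedBall hw
      refine (hFb w (hballU w hw')).trans ?_
      gcongr
      refine le_trans ?_ hpow
      exact Real.rpow_le_rpow_of_nonpos (by positivity)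
        ((hball w hw').trans (Complex.re_le_norm w)) (by norm_num))
  rw [e1, norm_mul, norm_pow, Complex.norm_real, Real.norm_of_nonneg hx0.le]
  have hp : 0 ≤ (1 + x) ^ (-(1 / 2) : ℝ) := by positivity
  calc _ ≤ x ^ j * (j.factorial * (‖c‖ * (2 * (1 + x) ^ (-(1 / 2) : ℝ)) * I) / (x / 2) ^ j) := by
        gcongr
    _ = (j.factorial * 2 ^ j * (‖c‖ * 2 * I)) * (1 + x) ^ (-(1 / 2) : ℝ) := by
        rw [div_pow]
        field_simp
    _ ≤ _ := by
        gcongr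
        linarith
end

section
/- There is an absolute constant C > 0 such that for all real numbers X, Y ≥ 1, every real T > 0, and every real R: ∫_{1/2}^{5/2} ∫_{1/2}^{5/2} 1_{2|xX − yY + R| > T} · |xX − yY + R|^{−1} dx dy ≤ (C / max{X,Y}) · (1 + log(1 + (X + Y + |R|)/T)), where 1_{2|xX − yY + R| > T} denotes the indicator of the condition 2|xX − yY + R| > T. -/
open scoped Classical

open MeasureTheory in
theorem aux_sym (T M : ℝ) (hT : 0 < T) (hM : 0 ≤ M) :
    ∫ u in (-M)..M, (T + |u|)⁻¹ = 2 * Real.log (1 + M / T) := by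
  have hcont : Continuous fun u : ℝ => (T + |u|)⁻¹ :=
    Continuous.inv₀ (by fun_prop) (fun u => by positivity)
  have h1 : ∫ u in (0:ℝ)..M, (T + |u|)⁻¹ = Real.log (1 + M / T) := by
    have : ∫ u in (0:ℝ)..M, (T + |u|)⁻¹ = ∫ u in (0:ℝ)..M, (fun v : ℝ => v⁻¹) (T + u) := by
      apply intervalIntegral.integral_congr
      intro u hu
      rw [Set.uIcc_of_le hM] at hu
      simp only [abs_of_nonneg hu.1]
    rw [this, intervalIntegral.integral_comp_add_left (fun v : ℝ => v⁻¹) T,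
      integral_inv_of_pos (by linarith) (by linarith)]
    congr 1
    field_simp
    ring
  have h2 : ∫ u in (-M)..0, (T + |u|)⁻¹ = ∫ u in (0:ℝ)..M, (T + |u|)⁻¹ := by
    have := intervalIntegral.integral_comp_neg (a := 0) (b := M) (fun u : ℝ => (T + |u|)⁻¹)
    simp only [abs_neg, neg_zero] at this
    exact this.symm
  rw [← intervalIntegral.integral_add_adjacent_intervals
    (hcont.intervalIntegrable (-M) 0) (hcont.intervalIntegrable 0 M), h2, h1]
  ring

open MeasureTheory in
theorem aux_inner (T S a c : ℝ) (hT : 0 < T) (hc : 0 < c)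
    (hS : |a| + 5 / 2 * c ≤ 5 / 2 * S) :
    ∫ y in Set.Icc (1 / 2 : ℝ) (5 / 2), 3 * (T + |a + c * y|)⁻¹ ≤
      9 / c * (1 + Real.log (1 + S / T)) := by
  have hcont : Continuous fun u : ℝ => (T + |u|)⁻¹ :=
    Continuous.inv₀ (by fun_prop) (fun u => by positivity)
  have hS0 : 0 < S := by have := abs_nonneg a; linarith
  have hab := abs_le.1 (le_refl |a|)
  rw [integral_Icc_eq_integral_Ioc, ← intervalIntegral.integral_of_le (by norm_num),
    intervalIntegral.integral_const_mul,
    intervalIntegral.integral_comp_add_mul (fun u : ℝ => (T + |u|)⁻¹) hc.ne' a]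
  have h1 : ∫ u in (a + c * (1/2))..(a + c * (5/2)), (T + |u|)⁻¹ ≤
      ∫ u in (-(5 / 2 * S))..(5 / 2 * S), (T + |u|)⁻¹ := by
    apply intervalIntegral.integral_mono_interval
    · linarith
    · linarith
    · linarith
    · exact Filter.Eventually.of_forall fun u => by positivity
    · exact hcont.intervalIntegrable _ _
  rw [aux_sym T _ hT (by positivity)] at h1
  have h2 : Real.log (1 + 5 / 2 * S / T) ≤ 3 / 2 + Real.log (1 + S / T) := by
    have : Real.log (1 + 5 / 2 * S / T) ≤ Real.log (5 / 2 * (1 + S / T)) := by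
      apply Real.log_le_log (by positivity)
      have : 5 / 2 * S / T = 5 / 2 * (S / T) := by ring
      linarith
    rw [Real.log_mul (by norm_num) (by positivity)] at this
    have := Real.log_le_sub_one_of_pos (show (0:ℝ) < 5 / 2 by norm_num)
    linarith
  have h3 : 0 ≤ Real.log (1 + S / T) := Real.log_nonneg (by
    have : 0 ≤ S / T := by positivity
    linarith)
  rw [smul_eq_mul]
  have h4 : c⁻¹ * ∫ u in (a + c * (1/2))..(a + c * (5/2)), (T + |u|)⁻¹ ≤
      c⁻¹ * (3 * (1 + Real.log (1 + S / T))) :=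
    mul_le_mul_of_nonneg_left (by linarith) (by positivity)
  calc _ ≤ 3 * (c⁻¹ * (3 * (1 + Real.log (1 + S / T)))) := by linarith
    _ = _ := by ring

open MeasureTheory in
theorem aux_outer (F : ℝ → ℝ) (B : ℝ) (h0 : ∀ x, 0 ≤ F x)
    (h : ∀ x ∈ Set.Icc (1 / 2 : ℝ) (5 / 2), F x ≤ B) :
    ∫ x in Set.Icc (1 / 2 : ℝ) (5 / 2), F x ≤ 2 * B := by
  have : ∫ x in Set.Icc (1 / 2 : ℝ) (5 / 2), F x ≤ ∫ x in Set.Icc (1 / 2 : ℝ) (5 / 2), B := by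
    apply integral_mono_of_nonneg
    · exact Filter.Eventually.of_forall h0
    · exact integrable_const B
    · exact (ae_restrict_iff' measurableSet_Icc).2 (Filter.Eventually.of_forall h)
  refine this.trans (le_of_eq ?_)
  simp
  norm_num

open MeasureTheory in
/-- The elementary integral bound used to control the integral `I` arising in the
integration-by-parts analysis of the delta-method weight function. -/
theorem integral_indicator_bound :
    ∃ C : ℝ, 0 < C ∧ ∀ X Y : ℝ, 1 ≤ X → 1 ≤ Y → ∀ T : ℝ, 0 < T → ∀ R : ℝ,
      (∫ x in Set.Icc (1 / 2 : ℝ) (5 / 2), ∫ y in Set.Icc (1 / 2 : ℝ) (5 / 2),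
        (if T < 2 * |x * X - y * Y + R| then |x * X - y * Y + R|⁻¹ else 0)) ≤
      (C / max X Y) * (1 + Real.log (1 + (X + Y + |R|) / T)) := by
  refine ⟨18, by norm_num, ?_⟩
  intro X Y hX hY T hT R
  have hGc : Continuous fun p : ℝ × ℝ => 3 * (T + |p.1 * X - p.2 * Y + R|)⁻¹ :=
    continuous_const.mul (Continuous.inv₀ (by fun_prop) (fun u => by positivity))
  have hG0 : ∀ x y : ℝ, 0 ≤ 3 * (T + |x * X - y * Y + R|)⁻¹ := fun x y => by positivity
  have hGi : Integrable (fun p : ℝ × ℝ => 3 * (T + |p.1 * X - p.2 * Y + R|)⁻¹)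
      ((volume.restrict (Set.Icc (1 / 2 : ℝ) (5 / 2))).prod
        (volume.restrict (Set.Icc (1 / 2 : ℝ) (5 / 2)))) := by
    rw [Measure.prod_restrict]
    exact hGc.continuousOn.integrableOn_compact (isCompact_Icc.prod isCompact_Icc)
  have hf0 : ∀ x y : ℝ,
      0 ≤ (if T < 2 * |x * X - y * Y + R| then |x * X - y * Y + R|⁻¹ else 0) := by
    intro x y
    split_ifs <;> positivity
  have hfG : ∀ x y : ℝ,
      (if T < 2 * |x * X - y * Y + R| then |x * X - y * Y + R|⁻¹ else 0) ≤
        3 * (T + |x * X - y * Y + R|)⁻¹ := by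
    intro x y
    split_ifs with h
    · have hu : 0 < |x * X - y * Y + R| := by linarith
      rw [← div_eq_mul_inv, inv_eq_one_div, div_le_div_iff₀ hu (by positivity)]
      linarith
    · exact hG0 x y
  have hin : ∀ x : ℝ, ∫ y in Set.Icc (1 / 2 : ℝ) (5 / 2),
        (if T < 2 * |x * X - y * Y + R| then |x * X - y * Y + R|⁻¹ else 0) ≤
      ∫ y in Set.Icc (1 / 2 : ℝ) (5 / 2), 3 * (T + |x * X - y * Y + R|)⁻¹ := by
    intro x
    apply integral_mono_of_nonneg
    · exact Filter.Eventually.of_forall (hf0 x)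
    · have : Continuous fun y : ℝ => 3 * (T + |x * X - y * Y + R|)⁻¹ :=
        hGc.comp (Continuous.prodMk_right x)
      exact this.continuousOn.integrableOn_compact isCompact_Icc
    · exact Filter.Eventually.of_forall (hfG x)
  have hRn := abs_nonneg R
  rcases le_total X Y with hXY | hXY
  · rw [max_eq_right hXY]
    have := aux_outer (fun x => ∫ y in Set.Icc (1 / 2 : ℝ) (5 / 2),
        (if T < 2 * |x * X - y * Y + R| then |x * X - y * Y + R|⁻¹ else 0))
        (9 / Y * (1 + Real.log (1 + (X + Y + |R|) / T)))
        (fun x => integral_nonneg (hf0 x)) (by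
      intro x hx
      refine (hin x).trans ?_
      have h := aux_inner T (X + Y + |R|) (-(x * X + R)) Y hT (by linarith) (by
        rw [abs_neg]
        have h1 := abs_add_le (x * X) R
        rw [abs_of_nonneg (a := x * X) (mul_nonneg (by linarith [hx.1]) (by linarith))] at h1
        have h2 : x * X ≤ 5 / 2 * X := mul_le_mul_of_nonneg_right hx.2 (by linarith)
        linarith)
      refine le_trans (le_of_eq ?_) h
      congr 1
      ext y
      rw [← abs_neg]
      congr 4
      ring)
    refine this.trans (le_of_eq (by ring))
  · rw [max_eq_left hXY]
    have h1 : (∫ x in Set.Icc (1 / 2 : ℝ) (5 / 2), ∫ y in Set.Icc (1 / 2 : ℝ) (5 / 2),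
        (if T < 2 * |x * X - y * Y + R| then |x * X - y * Y + R|⁻¹ else 0)) ≤
        ∫ x in Set.Icc (1 / 2 : ℝ) (5 / 2), ∫ y in Set.Icc (1 / 2 : ℝ) (5 / 2),
          3 * (T + |x * X - y * Y + R|)⁻¹ := by
      apply integral_mono_of_nonneg
      · exact Filter.Eventually.of_forall fun x => integral_nonneg (hf0 x)
      · exact hGi.integral_prod_left
      · exact Filter.Eventually.of_forall hin
    refine h1.trans ?_
    rw [integral_integral_swap hGi]
    have := aux_outer (fun y => ∫ x in Set.Icc (1 / 2 : ℝ) (5 / 2),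
        3 * (T + |x * X - y * Y + R|)⁻¹)
        (9 / X * (1 + Real.log (1 + (X + Y + |R|) / T)))
        (fun y => integral_nonneg (fun x => hG0 x y)) (by
      intro y hy
      have h := aux_inner T (X + Y + |R|) (-(y * Y) + R) X hT (by linarith) (by
        have h1 := abs_add_le (-(y * Y)) R
        rw [abs_neg, abs_of_nonneg (a := y * Y)
          (mul_nonneg (by linarith [hy.1]) (by linarith))] at h1
        have h2 : y * Y ≤ 5 / 2 * Y := mul_le_mul_of_nonneg_right hy.2 (by linarith)
        linarith)
      refine le_trans (le_of_eq ?_) h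
      congr 1
      ext x
      congr 4
      ring)
    refine this.trans (le_of_eq (by ring))
end
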